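/- arXiv:2207.06993 — 13 statements merged into one kernel-verified Lean document; each statement's English description precedes it below -/
import Mathlib

section
/- For any relational frame (X,◁): (1) the operation c_◁ : ℘(X) → ℘(X) defined by c_◁(A) = {x ∈ X : for every x' with x' ◁ x there exists x'' with x' ◁ x'' and x'' ∈ A} is a closure operator on ℘(X), i.e., it is inflationary (A ⊆ c_◁(A)), idempotent (c_◁(c_◁(A)) = c_◁(A)), and monotone (A ⊆ B implies c_◁(A) ⊆ c_◁(B)); and (2) the operation ¬_◁A = {x ∈ X : for all y with y ◁ x, y ∉ A} sends c_◁-fixpoints to c_◁-fixpoints. -/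
/-- The closure operation `c_◁` on subsets of a relational frame `(X, ◁)`. -/
def cl {X : Type*} (lt : X → X → Prop) (A : Set X) : Set X :=
  {x | ∀ x', lt x' x → ∃ x'', lt x' x'' ∧ x'' ∈ A}

/-- The negation operation `¬_◁` on subsets of a relational frame `(X, ◁)`. -/
def negSet {X : Type*} (lt : X → X → Prop) (A : Set X) : Set X :=
  {x | ∀ y, lt y x → y ∉ A}

theorem stmt_0 (X : Type*) [Nonempty X] (lt : X → X → Prop) :
    (∀ A : Set X, A ⊆ cl lt A) ∧
    (∀ A : Set X, cl lt (cl lt A) = cl lt A) ∧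
    (∀ A B : Set X, A ⊆ B → cl lt A ⊆ cl lt B) ∧
    (∀ A : Set X, cl lt A = A → cl lt (negSet lt A) = negSet lt A) := by
  have infl : ∀ A : Set X, A ⊆ cl lt A := fun A x hx x' h => ⟨x, h, hx⟩
  refine ⟨infl, ?_, ?_, ?_⟩
  · intro A
    refine Set.Subset.antisymm ?_ (infl _)
    intro x hx x' h
    obtain ⟨z, hz, hzA⟩ := hx x' h
    exact hzA x' hz
  · intro A B hAB x hx x' h
    obtain ⟨z, hz, hzA⟩ := hx x' h
    exact ⟨z, hz, hAB hzA⟩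
  · intro A _
    refine Set.Subset.antisymm ?_ (infl _)
    intro x hx y h
    obtain ⟨z, hz, hzA⟩ := hx y h
    exact hzA y hz
end

section
/- For any relational frame (X,◁): (1) the c_◁-fixpoints ordered by inclusion form a complete lattice 𝔏(X,◁), in which the meet of a family of fixpoints is its intersection and the join of a family is c_◁ of its union; (2) ¬_◁ is a precomplementation on 𝔏(X,◁); and (3) if ◁ is reflexive, then ¬_◁ is a protocomplementation on 𝔏(X,◁). -/
/-- (1) The `c_◁`-fixpoints ordered by inclusion form a complete lattice: every family of
fixpoints has an infimum, its intersection, and a supremum, `c_◁` of its union.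
(2) `¬_◁` is a precomplementation on this lattice: it maps fixpoints to fixpoints,
is antitone, and sends the top fixpoint `univ` to the bottom fixpoint `c_◁(∅)`.
(3) If `◁` is reflexive, `¬_◁` is a protocomplementation: moreover every fixpoint `A`
satisfies `A ∩ ¬_◁A = c_◁(∅)` (the bottom) and `¬_◁` sends the bottom to the top. -/
theorem stmt_1 (X : Type*) [Nonempty X] (lt : X → X → Prop) :
    (∀ S : Set (Set X), (∀ A ∈ S, cl lt A = A) →
      (cl lt (⋂₀ S) = ⋂₀ S ∧ (∀ A ∈ S, ⋂₀ S ⊆ A) ∧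
        (∀ B : Set X, cl lt B = B → (∀ A ∈ S, B ⊆ A) → B ⊆ ⋂₀ S)) ∧
      (cl lt (cl lt (⋃₀ S)) = cl lt (⋃₀ S) ∧ (∀ A ∈ S, A ⊆ cl lt (⋃₀ S)) ∧
        (∀ B : Set X, cl lt B = B → (∀ A ∈ S, A ⊆ B) → cl lt (⋃₀ S) ⊆ B))) ∧
    ((∀ A : Set X, cl lt A = A → cl lt (negSet lt A) = negSet lt A) ∧
      (∀ A B : Set X, cl lt A = A → cl lt B = B → A ⊆ B → negSet lt B ⊆ negSet lt A) ∧
      negSet lt Set.univ = cl lt ∅) ∧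
    (Reflexive lt →
      (∀ A : Set X, cl lt A = A → A ∩ negSet lt A = cl lt ∅) ∧
      negSet lt (cl lt ∅) = Set.univ) := by
  have sub : ∀ A : Set X, A ⊆ cl lt A := fun A x hx x' h => ⟨x, h, hx⟩
  have mono : ∀ A B : Set X, A ⊆ B → cl lt A ⊆ cl lt B := by
    intro A B hAB x hx x' h
    obtain ⟨y, h1, h2⟩ := hx x' h
    exact ⟨y, h1, hAB h2⟩
  have idem : ∀ A : Set X, cl lt (cl lt A) = cl lt A := by
    intro A
    refine Set.Subset.antisymm ?_ (sub _)
    intro x hx x' h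
    obtain ⟨y, h1, h2⟩ := hx x' h
    exact h2 x' h1
  refine ⟨?_, ⟨?_, ?_, ?_⟩, ?_⟩
  · intro S hS
    refine ⟨⟨?_, fun A hA => Set.sInter_subset_of_mem hA, fun B _ h => Set.subset_sInter h⟩,
      idem _, fun A hA => (Set.subset_sUnion_of_mem hA).trans (sub _), ?_⟩
    · refine Set.Subset.antisymm (Set.subset_sInter fun A hA => ?_) (sub _)
      have := mono _ _ (Set.sInter_subset_of_mem hA)
      rwa [hS A hA] at this
    · intro B hB h
      have := mono _ _ (Set.sUnion_subset h)
      rwa [hB] at this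
  · intro A _
    refine Set.Subset.antisymm ?_ (sub _)
    intro x hx y hy hyA
    obtain ⟨z, h1, h2⟩ := hx y hy
    exact h2 y h1 hyA
  · intro A B _ _ h x hx y hy hyA
    exact hx y hy (h hyA)
  · ext x
    simp [negSet, cl]
  · intro hr
    have he : cl lt (∅ : Set X) = ∅ := by
      ext x
      simp only [cl, Set.mem_setOf_eq, Set.mem_empty_iff_false, and_false, exists_false, iff_false]
      exact fun h => h x (hr x)
    rw [he]
    refine ⟨fun A _ => ?_, ?_⟩
    · ext x
      simp only [Set.mem_inter_iff, Set.mem_empty_iff_false, iff_false]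
      exact fun h => h.2 x (hr x) h.1
    · ext x
      simp [negSet]
end

section
/- For any relational frame (X,◁), the following are equivalent: (a) every c_◁-fixpoint A satisfies A ⊆ ¬_◁¬_◁A; (b) ◁ is pseudosymmetric, i.e., for all x ∈ X and all y with y ◁ x, there is a z with z ◁ y such that z pre-refines x. -/
/-- `x` pre-refines `y`: everything open to `x` is open to `y`. -/
def preRefines {X : Type*} (lt : X → X → Prop) (x y : X) : Prop :=
  ∀ z, lt z x → lt z y

theorem stmt_8 (X : Type*) [Nonempty X] (lt : X → X → Prop) :
    (∀ A : Set X, cl lt A = A → A ⊆ negSet lt (negSet lt A)) ↔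
    (∀ x y : X, lt y x → ∃ z, lt z y ∧ preRefines lt z x) := by
  constructor
  · intro h x y hyx
    have hfix : cl lt {z | preRefines lt z x} = {z | preRefines lt z x} := by
      ext w
      constructor
      · intro hw z hz
        obtain ⟨u, hzu, hu⟩ := hw z hz
        exact hu z hzu
      · intro hw z hz
        exact ⟨x, hw z hz, fun _ h => h⟩
    have hx : x ∈ {z | preRefines lt z x} := fun _ h => h
    by_contra hc
    exact h _ hfix hx y hyx (fun z hz hzA => hc ⟨z, hz, hzA⟩)
  · intro h A hA x hx y hyx hy
    obtain ⟨z, hzy, hzx⟩ := h x y hyx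
    apply hy z hzy
    rw [← hA]
    exact fun w hw => ⟨x, hzx w hw, hx⟩
end

section
/- For any relational frame (X,◁), the following are equivalent: (a) for all c_◁-fixpoints A and B, if A ∩ B equals the set of absurd states (which is the bottom element c_◁(∅) of the lattice of c_◁-fixpoints), then A ⊆ ¬_◁B; (b) ◁ is weakly compossible, i.e., for all x ∈ X and all y with y ◁ x, there is a non-absurd z that pre-refines both y and x. -/
/-- `x` is absurd: nothing is open to `x`. -/
def IsAbsurd {X : Type*} (lt : X → X → Prop) (x : X) : Prop :=
  ¬ ∃ y, lt y x

theorem stmt_9 (X : Type*) [Nonempty X] (lt : X → X → Prop) :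
    (∀ A B : Set X, cl lt A = A → cl lt B = B → A ∩ B = cl lt ∅ → A ⊆ negSet lt B) ↔
    (∀ x y : X, lt y x →
      ∃ z, ¬ IsAbsurd lt z ∧ preRefines lt z y ∧ preRefines lt z x) := by
  constructor
  · intro h x y hyx
    by_contra hn
    have fix : ∀ w : X, cl lt {z | preRefines lt z w} = {z | preRefines lt z w} := by
      intro w
      ext z
      constructor
      · intro hz u hu
        obtain ⟨v, huv, hv⟩ := hz u hu
        exact hv u huv
      · intro hz u hu
        exact ⟨z, hu, hz⟩
    refine h _ _ (fix x) (fix y) ?_ (fun _ h => h : preRefines lt x x) y hyx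
      (fun _ h => h : preRefines lt y y)
    ext z
    constructor
    · rintro ⟨hzx, hzy⟩ u hu
      exact (hn ⟨z, fun ha => ha ⟨u, hu⟩, hzy, hzx⟩).elim
    · intro hz
      refine ⟨fun u hu => ?_, fun u hu => ?_⟩ <;>
      · obtain ⟨_, _, hf⟩ := hz u hu
        exact hf.elim
  · intro h A B hA hB hAB x hx y hyx hy
    obtain ⟨z, hz, hzy, hzx⟩ := h x y hyx
    have h1 : z ∈ A := by
      rw [← hA]
      exact fun u hu => ⟨x, hzx u hu, hx⟩
    have h2 : z ∈ B := by
      rw [← hB]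
      exact fun u hu => ⟨y, hzy u hu, hy⟩
    have h3 : z ∈ cl lt ∅ := hAB ▸ ⟨h1, h2⟩
    apply hz
    rintro ⟨u, hu⟩
    obtain ⟨_, _, hf⟩ := h3 u hu
    exact hf
end

section
/- For any relational frame (X,◁), the following are equivalent: (a) every c_◁-fixpoint A satisfies ¬_◁¬_◁A ⊆ A; (b) for all x ∈ X and all y with y ◁ x, there exists y' with y' ◁ x such that for all z ∈ X, z ◁ y' implies y ◁ z. -/
theorem stmt_10 (X : Type*) [Nonempty X] (lt : X → X → Prop) :
    (∀ A : Set X, cl lt A = A → negSet lt (negSet lt A) ⊆ A) ↔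
    (∀ x y : X, lt y x → ∃ y', lt y' x ∧ ∀ z, lt z y' → lt y z) := by
  constructor
  · intro h x y hyx
    by_contra hc
    push Not at hc
    have hfix : cl lt {z | ¬ lt y z} = {z | ¬ lt y z} := by
      ext z
      constructor
      · intro hz hyz
        obtain ⟨w, hw, hw'⟩ := hz y hyz
        exact hw' hw
      · intro hz x' hx'
        exact ⟨z, hx', hz⟩
    refine h _ hfix (a := x) ?_ hyx
    intro y' hy' hn
    obtain ⟨z, hz, hz'⟩ := hc y' hy'
    exact hn z hz hz'
  · intro h A hA x hx
    rw [← hA]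
    intro y hy
    obtain ⟨y', hy', hz⟩ := h x y hy
    by_contra hc
    refine hx y' hy' ?_
    intro z hzy hzA
    exact hc ⟨z, hz z hzy, hzA⟩
end

section
/- Let L be a lattice and P a separating set of pairs of elements of L, with (a,b) ◁ (c,d) defined by c ≰ b. For a ∈ L define f(a) = {(x,y) ∈ P : x ≤ a}. Then: (1) f is a complete embedding of L into 𝔏(P,◁); and (2) if L is complete, then f is an isomorphism from L to 𝔏(P,◁). -/
/-- The relation `◁` on a set `P` of pairs of lattice elements: `(a,b) ◁ (c,d)` iff `c ≰ b`. -/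
def ltP {L : Type*} [Lattice L] (P : Set (L × L)) : ↥P → ↥P → Prop :=
  fun p q => ¬ (q.1.1 ≤ p.1.2)

/-- `P` is a separating set of pairs of elements of `L`. -/
def Separating {L : Type*} [Lattice L] (P : Set (L × L)) : Prop :=
  (∀ a b : L, ¬ a ≤ b → ∃ p ∈ P, p.1 ≤ a ∧ ¬ p.1 ≤ b) ∧
  (∀ (b : L) (p : ↥P), ¬ p.1.1 ≤ b →
    ∃ p' : ↥P, ltP P p' p ∧ ∀ p'' : ↥P, ltP P p' p'' → ¬ p''.1.1 ≤ b)

/-- The map `f(a) = {(x,y) ∈ P : x ≤ a}`. -/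
def emb {L : Type*} [Lattice L] (P : Set (L × L)) (a : L) : Set ↥P :=
  {p | p.1.1 ≤ a}

/-- (1) `f` is a complete embedding of `L` into the complete lattice `𝔏(P,◁)` of
`c_◁`-fixpoints (where meets of fixpoints are intersections and joins are `c_◁` of unions):
`f` is injective, lands in the fixpoints, and preserves all existing meets and joins.
(2) If `L` is complete (every subset has a least upper bound), then `f` is moreover
surjective onto the fixpoints, hence an isomorphism onto `𝔏(P,◁)`. -/
theorem stmt_11 {L : Type*} [Lattice L] (P : Set (L × L)) (hsep : Separating P) :
    Function.Injective (emb P) ∧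
    (∀ a : L, cl (ltP P) (emb P a) = emb P a) ∧
    (∀ (S : Set L) (a : L), IsGLB S a → emb P a = ⋂ s ∈ S, emb P s) ∧
    (∀ (S : Set L) (a : L), IsLUB S a → emb P a = cl (ltP P) (⋃ s ∈ S, emb P s)) ∧
    ((∀ S : Set L, ∃ a : L, IsLUB S a) →
      ∀ A : Set ↥P, cl (ltP P) A = A → ∃ a : L, emb P a = A) := by
  obtain ⟨h1, h2⟩ := hsep
  have mono : ∀ a b : L, emb P a ⊆ emb P b → a ≤ b := by
    intro a b h
    by_contra hn
    obtain ⟨p, hp, hpa, hpb⟩ := h1 a b hn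
    exact hpb (h (show (⟨p, hp⟩ : ↥P) ∈ emb P a from hpa))
  have clsub : ∀ (A : Set ↥P) (a : L), A ⊆ emb P a → cl (ltP P) A ⊆ emb P a := by
    intro A a hA x hx
    by_contra hn
    obtain ⟨p', hp', h⟩ := h2 a x hn
    obtain ⟨q, hq, hqA⟩ := hx p' hp'
    exact h q hq (hA hqA)
  have subcl : ∀ (S : Set L) (a : L), IsLUB S a → ∀ x ∈ emb P a, ∀ x' : ↥P, ltP P x' x →
      ∃ s ∈ S, ¬ s ≤ x'.1.2 := by
    intro S a ha x hx x' hx'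
    by_contra hn
    push Not at hn
    exact hx' (le_trans hx (ha.2 hn))
  refine ⟨?_, ?_, ?_, ?_, ?_⟩
  · intro a b h
    exact le_antisymm (mono a b h.subset) (mono b a h.symm.subset)
  · intro a
    exact Set.Subset.antisymm (clsub _ a subset_rfl) (fun x hx x' hx' => ⟨x, hx', hx⟩)
  · intro S a ha
    ext x
    simp only [Set.mem_iInter]
    exact le_isGLB_iff ha
  · intro S a ha
    apply Set.Subset.antisymm
    · intro x hx x' hx'
      obtain ⟨s, hs, hn⟩ := subcl S a ha x hx x' hx'
      obtain ⟨p, hp, hps, hpn⟩ := h1 _ _ hn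
      exact ⟨⟨p, hp⟩, hpn, Set.mem_biUnion hs hps⟩
    · apply clsub
      exact Set.iUnion₂_subset fun s hs x hx => le_trans hx (ha.1 hs)
  · intro hc A hA
    obtain ⟨a, ha⟩ := hc ((fun p : ↥P => p.1.1) '' A)
    refine ⟨a, Set.Subset.antisymm ?_ ?_⟩
    · intro x hx
      rw [← hA]
      intro x' hx'
      obtain ⟨_, ⟨p, hp, rfl⟩, hn⟩ := subcl _ a ha x hx x' hx'
      exact ⟨p, hn, hp⟩
    · exact fun x hx => ha.1 ⟨x, hx, rfl⟩
end

section
/- Let L be a bounded lattice, Λ a meet-dense set of elements of L, and ¬ a protocomplementation on L. Let P = {(a,¬a) : a ∈ L, a ≠ 0} ∪ {(1,b) : b ∈ Λ, b ≠ 1}, with (a,b) ◁ (c,d) iff c ≰ b. Then the map f(a) = {(x,y) ∈ P : x ≤ a} is a complete embedding of (L,¬) into (𝔏(P,◁), ¬_◁), the relation ◁ is reflexive, and if L is complete, the embedding is an isomorphism. -/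
/-- The set of pairs `P = {(a,¬a) : a ∈ L, a ≠ 0} ∪ {(1,b) : b ∈ Λ, b ≠ 1}`. -/
def Pproto {L : Type*} [Lattice L] [BoundedOrder L] (neg : L → L) (Λ : Set L) :
    Set (L × L) :=
  {p | (∃ a : L, a ≠ ⊥ ∧ p = (a, neg a)) ∨ (∃ b ∈ Λ, b ≠ ⊤ ∧ p = ((⊤ : L), b))}

theorem mem_cl_iff_aux {L : Type*} [Lattice L] [BoundedOrder L] (Λ : Set L) (neg : L → L)
    (hΛ : ∀ a : L, ∃ S : Set L, S ⊆ Λ ∧ IsGLB S a) (A : Set ↥(Pproto neg Λ))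
    (x : ↥(Pproto neg Λ)) :
    x ∈ cl (ltP (Pproto neg Λ)) A ↔ ∀ u : L, (∀ y ∈ A, y.1.1 ≤ u) → x.1.1 ≤ u := by
  constructor
  · intro hx u hu
    obtain ⟨S, hS, hglb⟩ := hΛ u
    refine hglb.2 ?_
    intro b hb
    by_cases hbt : b = ⊤
    · rw [hbt]; exact le_top
    by_contra hn
    obtain ⟨z, hz1, hz2⟩ := hx ⟨(⊤, b), Or.inr ⟨b, hS hb, hbt, rfl⟩⟩ hn
    exact hz1 (le_trans (hu z hz2) (hglb.1 hb))
  · intro hx x' hx'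
    by_contra hn
    push Not at hn
    refine hx' (hx _ ?_)
    intro y hy
    by_contra h
    exact hn y h hy

theorem emb_ub_aux {L : Type*} [Lattice L] [BoundedOrder L] (Λ : Set L) (neg : L → L)
    (a u : L) (h : ∀ y ∈ emb (Pproto neg Λ) a, y.1.1 ≤ u) : a ≤ u := by
  by_cases ha : a = ⊥
  · rw [ha]; exact bot_le
  · exact h ⟨(a, neg a), Or.inl ⟨a, ha, rfl⟩⟩ (le_refl a)

/-- Representation of a bounded lattice with a protocomplementation `¬` (an antitone
semicomplementation with `¬0 = 1`): the map `f` is a complete embedding of `(L,¬)` into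
`(𝔏(P,◁), ¬_◁)` (injective, lands in fixpoints, preserves all existing meets and joins,
and commutes with negation), the relation `◁` is reflexive, and if `L` is complete
(every subset has a least upper bound), the embedding is an isomorphism (surjective
onto the fixpoints). -/
theorem stmt_12 {L : Type*} [Lattice L] [BoundedOrder L] (Λ : Set L) (neg : L → L)
    (hΛ : ∀ a : L, ∃ S : Set L, S ⊆ Λ ∧ IsGLB S a)
    (hanti : ∀ a b : L, a ≤ b → neg b ≤ neg a)
    (hsemi : ∀ a : L, a ⊓ neg a = ⊥)
    (hbot : neg ⊥ = ⊤) :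
    Function.Injective (emb (Pproto neg Λ)) ∧
    (∀ a : L, cl (ltP (Pproto neg Λ)) (emb (Pproto neg Λ) a) = emb (Pproto neg Λ) a) ∧
    (∀ (S : Set L) (a : L), IsGLB S a → emb (Pproto neg Λ) a = ⋂ s ∈ S, emb (Pproto neg Λ) s) ∧
    (∀ (S : Set L) (a : L), IsLUB S a →
      emb (Pproto neg Λ) a = cl (ltP (Pproto neg Λ)) (⋃ s ∈ S, emb (Pproto neg Λ) s)) ∧
    (∀ a : L, emb (Pproto neg Λ) (neg a) = negSet (ltP (Pproto neg Λ)) (emb (Pproto neg Λ) a)) ∧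
    Reflexive (ltP (Pproto neg Λ)) ∧
    ((∀ S : Set L, ∃ a : L, IsLUB S a) →
      ∀ A : Set ↥(Pproto neg Λ), cl (ltP (Pproto neg Λ)) A = A →
        ∃ a : L, emb (Pproto neg Λ) a = A) := by
  have key := mem_cl_iff_aux Λ neg hΛ
  have ub := emb_ub_aux Λ neg
  refine ⟨?_, ?_, ?_, ?_, ?_, ?_, ?_⟩
  · intro a b h
    apply le_antisymm
    · apply ub
      intro y hy
      rw [h] at hy
      exact hy
    · apply ub
      intro y hy
      rw [← h] at hy
      exact hy
  · intro a
    ext x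
    rw [key]
    exact ⟨fun h => h a fun y hy => hy, fun h u hu => le_trans h (ub a u hu)⟩
  · intro S a h
    ext x
    simp only [Set.mem_iInter]
    exact ⟨fun hx s hs => le_trans hx (h.1 hs), fun hx => h.2 fun s hs => hx s hs⟩
  · intro S a h
    ext x
    rw [key]
    constructor
    · intro hx u hu
      refine le_trans hx (h.2 fun s hs => ub s u fun y hy => hu y ?_)
      exact Set.mem_biUnion hs hy
    · intro hx
      refine hx a fun y hy => ?_
      simp only [Set.mem_iUnion] at hy
      obtain ⟨s, hs, hy⟩ := hy
      exact le_trans hy (h.1 hs)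
  · intro a
    ext x
    constructor
    · intro hx y hyx hya
      apply hyx
      have hx' : x.1.1 ≤ neg a := hx
      have hya' : y.1.1 ≤ a := hya
      rcases y.2 with ⟨c, _, hc⟩ | ⟨b, _, _, hb⟩
      · rw [hc] at hya' ⊢
        exact le_trans hx' (hanti _ _ hya')
      · rw [hb] at hya' ⊢
        have h1 := hsemi a
        rw [top_le_iff.1 hya', top_inf_eq] at h1
        rw [top_le_iff.1 hya', h1] at hx'
        exact le_trans hx' bot_le
    · intro hx
      by_cases ha : a = ⊥
      · change x.1.1 ≤ neg a
        rw [ha, hbot]; exact le_top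
      · by_contra hn
        exact hx ⟨(a, neg a), Or.inl ⟨a, ha, rfl⟩⟩ hn (le_refl a)
  · intro x hx
    rcases x.2 with ⟨c, hc0, hc⟩ | ⟨b, _, hbt, hb⟩
    · rw [hc] at hx
      have h1 := hsemi c
      rw [inf_eq_left.2 hx] at h1
      exact hc0 h1
    · rw [hb] at hx
      exact hbt (top_le_iff.1 hx)
  · intro hL A hA
    obtain ⟨a, ha⟩ := hL ((fun y : ↥(Pproto neg Λ) => y.1.1) '' A)
    refine ⟨a, ?_⟩
    ext x
    rw [← hA, key]
    constructor
    · intro hx u hu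
      refine le_trans hx (ha.2 ?_)
      rintro _ ⟨y, hy, rfl⟩
      exact hu y hy
    · intro hx
      exact hx a fun y hy => ha.1 ⟨y, hy, rfl⟩
end

section
/- Let L be a bounded lattice, V a join-dense set of elements of L, Λ a meet-dense set of elements of L, and ¬ a weak pseudocomplementation on L. Let P = {(a,¬a) : a ∈ V, a ≠ 0} ∪ {(1,b) : b ∈ Λ, b ≠ 1}, with (a,b) ◁ (c,d) iff c ≰ b. Then the map f(a) = {(x,y) ∈ P : x ≤ a} is a complete embedding of (L,¬) into (𝔏(P,◁), ¬_◁); the relation ◁ is reflexive and pseudosymmetric, and strongly pseudosymmetric if V = L; if moreover ¬ is a pseudocomplementation, then ◁ is weakly compossible; and if L is complete, the embedding is an isomorphism. -/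
/-- `◁` is pseudosymmetric: whenever `y ◁ x`, some `z ◁ y` pre-refines `x`. -/
def Pseudosymmetric {X : Type*} (lt : X → X → Prop) : Prop :=
  ∀ x y, lt y x → ∃ z, lt z y ∧ preRefines lt z x

/-- `◁` is strongly pseudosymmetric: whenever `y ◁ x`, some `z ◁ y` pre-refines `x`
and is pre-refined by `x`. -/
def StronglyPseudosymmetric {X : Type*} (lt : X → X → Prop) : Prop :=
  ∀ x y, lt y x → ∃ z, lt z y ∧ preRefines lt z x ∧ preRefines lt x z

/-- `◁` is weakly compossible: whenever `y ◁ x`, some non-absurd `z` pre-refines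
both `y` and `x`. -/
def WeaklyCompossible {X : Type*} (lt : X → X → Prop) : Prop :=
  ∀ x y, lt y x → ∃ z, ¬ IsAbsurd lt z ∧ preRefines lt z y ∧ preRefines lt z x

/-- The set of pairs `P = {(a,¬a) : a ∈ V, a ≠ 0} ∪ {(1,b) : b ∈ Λ, b ≠ 1}`. -/
def Pweak {L : Type*} [Lattice L] [BoundedOrder L] (neg : L → L) (V Λ : Set L) :
    Set (L × L) :=
  {p | (∃ a ∈ V, a ≠ ⊥ ∧ p = (a, neg a)) ∨ (∃ b ∈ Λ, b ≠ ⊤ ∧ p = ((⊤ : L), b))}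

/-- Representation of a bounded lattice with a weak pseudocomplementation `¬` (an antitone
semicomplementation satisfying `a ≤ ¬¬a`): the map `f` is a complete embedding of `(L,¬)`
into `(𝔏(P,◁), ¬_◁)`; `◁` is reflexive and pseudosymmetric, and strongly pseudosymmetric
if `V = L`; if moreover `¬` is a pseudocomplementation, then `◁` is weakly compossible;
and if `L` is complete, the embedding is an isomorphism (surjective onto the fixpoints). -/
theorem stmt_13 {L : Type*} [Lattice L] [BoundedOrder L] (V Λ : Set L) (neg : L → L)
    (hV : ∀ a : L, ∃ S : Set L, S ⊆ V ∧ IsLUB S a)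
    (hΛ : ∀ a : L, ∃ S : Set L, S ⊆ Λ ∧ IsGLB S a)
    (hanti : ∀ a b : L, a ≤ b → neg b ≤ neg a)
    (hsemi : ∀ a : L, a ⊓ neg a = ⊥)
    (hdni : ∀ a : L, a ≤ neg (neg a)) :
    Function.Injective (emb (Pweak neg V Λ)) ∧
    (∀ a : L, cl (ltP (Pweak neg V Λ)) (emb (Pweak neg V Λ) a) = emb (Pweak neg V Λ) a) ∧
    (∀ (S : Set L) (a : L), IsGLB S a →
      emb (Pweak neg V Λ) a = ⋂ s ∈ S, emb (Pweak neg V Λ) s) ∧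
    (∀ (S : Set L) (a : L), IsLUB S a →
      emb (Pweak neg V Λ) a = cl (ltP (Pweak neg V Λ)) (⋃ s ∈ S, emb (Pweak neg V Λ) s)) ∧
    (∀ a : L, emb (Pweak neg V Λ) (neg a) =
      negSet (ltP (Pweak neg V Λ)) (emb (Pweak neg V Λ) a)) ∧
    Reflexive (ltP (Pweak neg V Λ)) ∧
    Pseudosymmetric (ltP (Pweak neg V Λ)) ∧
    (V = Set.univ → StronglyPseudosymmetric (ltP (Pweak neg V Λ))) ∧
    ((∀ a : L, IsGreatest {y : L | a ⊓ y = ⊥} (neg a)) →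
      WeaklyCompossible (ltP (Pweak neg V Λ))) ∧
    ((∀ S : Set L, ∃ a : L, IsLUB S a) →
      ∀ A : Set ↥(Pweak neg V Λ), cl (ltP (Pweak neg V Λ)) A = A →
        ∃ a : L, emb (Pweak neg V Λ) a = A) := by
  have dV : ∀ a c : L, ¬ a ≤ c → ∃ v ∈ V, v ≠ ⊥ ∧ v ≤ a ∧ ¬ v ≤ c := by
    intro a c h
    obtain ⟨S, hS, hl⟩ := hV a
    by_contra hc
    push Not at hc
    refine h (hl.2 fun v hv => ?_)
    by_cases h0 : v = ⊥
    · rw [h0]; exact bot_le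
    · exact hc v (hS hv) h0 (hl.1 hv)
  have dΛ : ∀ a c : L, ¬ a ≤ c → ∃ l ∈ Λ, l ≠ ⊤ ∧ c ≤ l ∧ ¬ a ≤ l := by
    intro a c h
    obtain ⟨S, hS, hl⟩ := hΛ c
    by_contra hc
    push Not at hc
    refine h (hl.2 fun v hv => ?_)
    by_cases h0 : v = ⊤
    · rw [h0]; exact le_top
    · exact hc v (hS hv) h0 (hl.1 hv)
  have hnt : neg ⊤ = ⊥ := by simpa using hsemi ⊤
  have gal : ∀ a b : L, a ≤ neg b → b ≤ neg a := fun a b h => (hdni b).trans (hanti _ _ h)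
  have mV : ∀ v ∈ V, v ≠ ⊥ → (v, neg v) ∈ Pweak neg V Λ := fun v hv h0 => Or.inl ⟨v, hv, h0, rfl⟩
  have mΛ : ∀ b ∈ Λ, b ≠ ⊤ → ((⊤ : L), b) ∈ Pweak neg V Λ := fun b hb h0 => Or.inr ⟨b, hb, h0, rfl⟩
  have hrefl : ∀ x, ltP (Pweak neg V Λ) x x := by
    rintro ⟨x, ⟨a, ha, h0, rfl⟩ | ⟨b, hb, h1, rfl⟩⟩ h
    · have h : a ≤ neg a := h
      have := hsemi a
      rw [inf_eq_left.2 h] at this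
      exact h0 this
    · exact h1 (top_le_iff.1 h)
  have key : ∀ (A : Set ↥(Pweak neg V Λ)) (s : L), IsLUB ((fun p => p.1.1) '' A) s →
      cl (ltP (Pweak neg V Λ)) A = emb (Pweak neg V Λ) s := by
    intro A s hs
    ext x
    constructor
    · intro hx
      by_contra h
      obtain ⟨l, hl, h1, hsl, hxl⟩ := dΛ x.1.1 s h
      obtain ⟨y, hy, hyA⟩ := hx ⟨_, mΛ l hl h1⟩ hxl
      exact hy ((hs.1 ⟨y, hyA, rfl⟩).trans hsl)
    · intro hx p hp
      by_contra hc
      push Not at hc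
      refine hp (le_trans hx (hs.2 ?_))
      rintro _ ⟨y, hy, rfl⟩
      by_contra h
      exact hc y h hy
  have lub : ∀ a : L, IsLUB ((fun p => p.1.1) '' emb (Pweak neg V Λ) a) a := by
    intro a
    constructor
    · rintro _ ⟨y, hy, rfl⟩
      exact hy
    · intro u hu
      by_contra h
      obtain ⟨v, hv, h0, hva, hvu⟩ := dV a u h
      exact hvu (hu ⟨⟨_, mV v hv h0⟩, hva, rfl⟩)
  have pr : ∀ x y : ↥(Pweak neg V Λ), x.1.1 ≤ y.1.1 → preRefines (ltP (Pweak neg V Λ)) x y :=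
    fun x y h z hz hy => hz (h.trans hy)
  refine ⟨?_, fun a => key _ _ (lub a), ?_, ?_, ?_, hrefl, ?_, ?_, ?_, ?_⟩
  · intro a b h
    have h1 := lub a
    rw [h] at h1
    exact h1.unique (lub b)
  · intro S a ha
    ext x
    simp only [Set.mem_iInter]
    exact ⟨fun hx s hs => le_trans hx (ha.1 hs), fun hx => ha.2 fun s hs => hx s hs⟩
  · intro S a ha
    refine (key _ _ ⟨?_, ?_⟩).symm
    · rintro _ ⟨y, hy, rfl⟩
      simp only [Set.mem_iUnion] at hy
      obtain ⟨s, hs, hy⟩ := hy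
      exact le_trans hy (ha.1 hs)
    · intro u hu
      refine ha.2 fun s hs => (lub s).2 ?_
      rintro _ ⟨y, hy, rfl⟩
      exact hu ⟨y, Set.mem_biUnion hs hy, rfl⟩
  · intro a
    ext x
    constructor
    · rintro hx ⟨y, ⟨v, hv, h0, rfl⟩ | ⟨b, hb, h1, rfl⟩⟩ hy hya
      · exact hy (le_trans hx (hanti _ _ hya))
      · have : a = ⊤ := top_le_iff.1 hya
        subst this
        have hx : x.1.1 ≤ neg ⊤ := hx
        rw [hnt] at hx
        exact hy (hx.trans bot_le)
    · intro hx
      refine gal _ _ ?_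
      by_contra h
      obtain ⟨v, hv, h0, hva, hvu⟩ := dV _ _ h
      exact hx ⟨_, mV v hv h0⟩ (fun h => hvu (gal _ _ h)) hva
  · rintro x ⟨y, ⟨v, hv, h0, rfl⟩ | ⟨b, hb, h1, rfl⟩⟩ h
    · obtain ⟨u, hu, hu0, hux, huv⟩ := dV _ _ h
      exact ⟨⟨_, mV u hu hu0⟩, fun h => huv (gal _ _ h), pr _ _ hux⟩
    · exact ⟨x, fun h => hrefl x (le_trans le_top h), pr _ _ le_rfl⟩
  · rintro hU x ⟨y, ⟨v, hv, h0, rfl⟩ | ⟨b, hb, h1, rfl⟩⟩ h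
    · have hx0 : x.1.1 ≠ ⊥ := fun e => h (e.le.trans bot_le)
      exact ⟨⟨_, mV x.1.1 (Set.eq_univ_iff_forall.1 hU _) hx0⟩, fun h' => h (gal _ _ h'),
        pr _ _ le_rfl, pr _ _ le_rfl⟩
    · exact ⟨x, fun h => hrefl x (le_trans le_top h), pr _ _ le_rfl, pr _ _ le_rfl⟩
  · rintro hp x ⟨y, ⟨v, hv, h0, rfl⟩ | ⟨b, hb, h1, rfl⟩⟩ h
    · have hn : ¬ v ⊓ x.1.1 ≤ ⊥ := fun e => h ((hp v).2 (le_bot_iff.1 e))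
      obtain ⟨u, hu, hu0, hux, huv⟩ := dV _ _ hn
      exact ⟨⟨_, mV u hu hu0⟩, fun h => h ⟨_, hrefl _⟩, pr _ _ (hux.trans inf_le_left),
        pr _ _ (hux.trans inf_le_right)⟩
    · exact ⟨x, fun h => h ⟨_, hrefl _⟩, pr _ _ le_top, pr _ _ le_rfl⟩
  · intro hc A hA
    obtain ⟨a, ha⟩ := hc ((fun p => p.1.1) '' A)
    exact ⟨a, by rw [← key A a ha, hA]⟩
end

section
/- Let L be a bounded lattice, Λ a meet-dense set of elements of L, and ¬ an antitone unary operation on L. Define P = {(a,¬a) : a ∈ L} ∪ {(1,b) : b ∈ Λ}, with (a,b) ◁ (c,d) iff c ≰ b, and F = c_◁({(¬1, ¬¬1)}). Then the map f(a) = {(x,y) ∈ P : x ≤ a} is a complete embedding of (L,¬) into (𝔏(P,◁), ¬_{◁,F}), which is an isomorphism if L is complete. -/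
/-- The negation operation `¬_{◁,F}` relative to a distinguished set `F`. -/
def negSetF {X : Type*} (lt : X → X → Prop) (F A : Set X) : Set X :=
  {x | ∀ x', lt x' x → x' ∈ A → ∃ x'', lt x' x'' ∧ x'' ∈ F}

/-- The set of pairs `P = {(a,¬a) : a ∈ L} ∪ {(1,b) : b ∈ Λ}`. -/
def Pant {L : Type*} [Lattice L] [BoundedOrder L] (neg : L → L) (Λ : Set L) :
    Set (L × L) :=
  {p | (∃ a : L, p = (a, neg a)) ∨ (∃ b ∈ Λ, p = ((⊤ : L), b))}

/-- The distinguished fixpoint `F = c_◁({(¬1, ¬¬1)})`. -/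
def Fant {L : Type*} [Lattice L] [BoundedOrder L] (neg : L → L) (Λ : Set L) :
    Set ↥(Pant neg Λ) :=
  cl (ltP (Pant neg Λ)) {p | p.1 = (neg ⊤, neg (neg ⊤))}

theorem mem_cl_iff' {L : Type*} [Lattice L] (P : Set (L × L)) (A : Set ↥P) (x : ↥P) :
    x ∈ cl (ltP P) A ↔ ∀ x' : ↥P, (∀ q ∈ A, q.1.1 ≤ x'.1.2) → x.1.1 ≤ x'.1.2 := by
  constructor
  · intro h x' hq
    by_contra hc
    obtain ⟨q, h1, h2⟩ := h x' hc
    exact h1 (hq q h2)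
  · intro h x' hx
    by_contra hc
    apply hx
    apply h x'
    intro q hq
    by_contra hn
    exact hc ⟨q, hn, hq⟩

theorem cl_eq_emb {L : Type*} [Lattice L] [BoundedOrder L] (Λ : Set L) (neg : L → L)
    (hΛ : ∀ a : L, ∃ S : Set L, S ⊆ Λ ∧ IsGLB S a) (A : Set ↥(Pant neg Λ)) (a : L)
    (ha : IsLUB ((fun p : ↥(Pant neg Λ) => p.1.1) '' A) a) :
    cl (ltP (Pant neg Λ)) A = emb (Pant neg Λ) a := by
  ext x
  rw [mem_cl_iff']
  constructor
  · intro h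
    obtain ⟨T, hT, hg⟩ := hΛ a
    refine hg.2 ?_
    intro b hb
    refine h ⟨(⊤, b), Or.inr ⟨b, hT hb, rfl⟩⟩ ?_
    intro q hq
    exact (ha.1 ⟨q, hq, rfl⟩).trans (hg.1 hb)
  · intro h x' hx'
    refine le_trans h (ha.2 ?_)
    rintro _ ⟨q, hq, rfl⟩
    exact hx' q hq

/-- Representation of a bounded lattice with an antitone unary operation `¬`: the map
`f(a) = {(x,y) ∈ P : x ≤ a}` is a complete embedding of `(L,¬)` into
`(𝔏(P,◁), ¬_{◁,F})` (injective, lands in fixpoints, preserves all existing meets and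
joins, and sends `¬a` to `¬_{◁,F} f(a)`), which is an isomorphism (surjective onto the
fixpoints) if `L` is complete. -/
theorem stmt_14 {L : Type*} [Lattice L] [BoundedOrder L] (Λ : Set L) (neg : L → L)
    (hΛ : ∀ a : L, ∃ S : Set L, S ⊆ Λ ∧ IsGLB S a)
    (hanti : ∀ a b : L, a ≤ b → neg b ≤ neg a) :
    Function.Injective (emb (Pant neg Λ)) ∧
    (∀ a : L, cl (ltP (Pant neg Λ)) (emb (Pant neg Λ) a) = emb (Pant neg Λ) a) ∧
    (∀ (S : Set L) (a : L), IsGLB S a → emb (Pant neg Λ) a = ⋂ s ∈ S, emb (Pant neg Λ) s) ∧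
    (∀ (S : Set L) (a : L), IsLUB S a →
      emb (Pant neg Λ) a = cl (ltP (Pant neg Λ)) (⋃ s ∈ S, emb (Pant neg Λ) s)) ∧
    (∀ a : L, emb (Pant neg Λ) (neg a) =
      negSetF (ltP (Pant neg Λ)) (Fant neg Λ) (emb (Pant neg Λ) a)) ∧
    ((∀ S : Set L, ∃ a : L, IsLUB S a) →
      ∀ A : Set ↥(Pant neg Λ), cl (ltP (Pant neg Λ)) A = A →
        ∃ a : L, emb (Pant neg Λ) a = A) := by
  have key := cl_eq_emb Λ neg hΛ
  let pt : L → ↥(Pant neg Λ) := fun a => ⟨(a, neg a), Or.inl ⟨a, rfl⟩⟩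
  have hF : Fant neg Λ = emb (Pant neg Λ) (neg ⊤) := by
    apply key
    constructor
    · rintro _ ⟨q, hq, rfl⟩
      have hq' : q.1 = (neg ⊤, neg (neg ⊤)) := hq
      simp [hq']
    · intro u hu
      exact hu ⟨pt (neg ⊤), rfl, rfl⟩
  refine ⟨?_, ?_, ?_, ?_, ?_, ?_⟩
  · intro a b h
    apply le_antisymm
    · have : pt a ∈ emb (Pant neg Λ) a := le_refl a
      rw [h] at this
      exact this
    · have : pt b ∈ emb (Pant neg Λ) b := le_refl b
      rw [← h] at this
      exact this
  · intro a
    apply key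
    constructor
    · rintro _ ⟨q, hq, rfl⟩
      exact hq
    · intro u hu
      exact hu ⟨pt a, le_refl a, rfl⟩
  · intro S a ha
    ext x
    simp only [Set.mem_iInter]
    exact ⟨fun h s hs => le_trans h (ha.1 hs), fun h => ha.2 fun s hs => h s hs⟩
  · intro S a ha
    symm
    apply key
    constructor
    · rintro _ ⟨q, hq, rfl⟩
      simp only [Set.mem_iUnion] at hq
      obtain ⟨s, hs, h⟩ := hq
      exact le_trans h (ha.1 hs)
    · intro u hu
      refine ha.2 fun s hs => hu ⟨pt s, ?_, rfl⟩
      simp only [Set.mem_iUnion]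
      exact ⟨s, hs, le_refl s⟩
  · intro a
    rw [hF]
    ext x
    constructor
    · intro h x' hx hxa
      have h : x.1.1 ≤ neg a := h
      have hxa : x'.1.1 ≤ a := hxa
      have hx : ¬ x.1.1 ≤ x'.1.2 := hx
      refine ⟨pt (neg ⊤), ?_, le_refl _⟩
      intro hn
      have hn : neg ⊤ ≤ x'.1.2 := hn
      apply hx
      rcases x'.2 with ⟨c, hc⟩ | ⟨b, -, hb⟩
      · rw [hc] at hxa ⊢
        exact h.trans (hanti _ _ hxa)
      · rw [hb] at hxa
        have : a = ⊤ := top_le_iff.mp hxa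
        subst this
        exact h.trans hn
    · intro h
      by_contra hc
      obtain ⟨q, h1, h2⟩ := h (pt a) hc (le_refl a)
      exact h1 (le_trans h2 (hanti _ _ le_top))
  · intro hS A hA
    obtain ⟨a, ha⟩ := hS ((fun p : ↥(Pant neg Λ) => p.1.1) '' A)
    exact ⟨a, (key A a ha).symm.trans hA⟩
end

section
/- For any bounded lattice L and protocomplementation ¬ on L, the map a ↦ â on the filter-ideal frame FI(L,¬) is: (1) an embedding of (L,¬) into (𝔏(FI(L,¬)), ¬_◁), i.e., each â is a c_◁-fixpoint and the map is injective and preserves 0, 1, binary meets, binary joins, and ¬; and (2) an isomorphism from (L,¬) onto the subalgebra of (𝔏(FI(L,¬)), ¬_◁) consisting of those c_◁-fixpoints that are compact open in the space S(L). -/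
/-- `F` is a (possibly improper) filter in the lattice `L`. -/
def IsLatFilter {L : Type*} [Lattice L] (F : Set L) : Prop :=
  F.Nonempty ∧ (∀ a ∈ F, ∀ b : L, a ≤ b → b ∈ F) ∧ (∀ a ∈ F, ∀ b ∈ F, a ⊓ b ∈ F)

/-- `I` is an ideal in the lattice `L`. -/
def IsLatIdeal {L : Type*} [Lattice L] (I : Set L) : Prop :=
  I.Nonempty ∧ (∀ a ∈ I, ∀ b : L, b ≤ a → b ∈ I) ∧ (∀ a ∈ I, ∀ b ∈ I, a ⊔ b ∈ I)

/-- The set of states of the filter-ideal frame `FI(L,¬)`: pairs `(F,I)` of a filter `F`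
and an ideal `I` with `F ∩ I = ∅` and `{¬a : a ∈ F} ⊆ I`. -/
def FIstates {L : Type*} [Lattice L] (neg : L → L) : Set (Set L × Set L) :=
  {p | IsLatFilter p.1 ∧ IsLatIdeal p.2 ∧ p.1 ∩ p.2 = ∅ ∧ ∀ a ∈ p.1, neg a ∈ p.2}

/-- The relation of `FI(L,¬)`: `(F,I) ◁ (F',I')` iff `I ∩ F' = ∅`. -/
def ltFI {L : Type*} [Lattice L] (neg : L → L) :
    ↥(FIstates neg) → ↥(FIstates neg) → Prop :=
  fun p q => p.1.2 ∩ q.1.1 = ∅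

/-- The map `a ↦ â = {(F,I) : a ∈ F}`. -/
def hat {L : Type*} [Lattice L] (neg : L → L) (a : L) : Set ↥(FIstates neg) :=
  {p | a ∈ p.1.1}

/-- The spectral-style topology on `FI(L,¬)`, generated by the sets `â`. -/
def FItop {L : Type*} [Lattice L] (neg : L → L) : TopologicalSpace ↥(FIstates neg) :=
  TopologicalSpace.generateFrom {U | ∃ a : L, U = hat neg a}

theorem FI_bot_mem {L : Type*} [Lattice L] [BoundedOrder L] {neg : L → L}
    (p : ↥(FIstates neg)) : (⊥ : L) ∈ p.1.2 := by
  obtain ⟨-, ⟨⟨c, hc⟩, hd, -⟩, -, -⟩ := p.2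
  exact hd c hc ⊥ bot_le

theorem FI_top_mem {L : Type*} [Lattice L] [BoundedOrder L] {neg : L → L}
    (p : ↥(FIstates neg)) : (⊤ : L) ∈ p.1.1 := by
  obtain ⟨⟨⟨c, hc⟩, hd, -⟩, -, -, -⟩ := p.2
  exact hd c hc ⊤ le_top

theorem FI_up {L : Type*} [Lattice L] {neg : L → L}
    (p : ↥(FIstates neg)) {a b : L} (ha : a ∈ p.1.1) (h : a ≤ b) : b ∈ p.1.1 :=
  p.2.1.2.1 a ha b h

theorem FI_down {L : Type*} [Lattice L] {neg : L → L}
    (p : ↥(FIstates neg)) {a b : L} (ha : a ∈ p.1.2) (h : b ≤ a) : b ∈ p.1.2 :=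
  p.2.2.1.2.1 a ha b h

theorem FI_disj {L : Type*} [Lattice L] {neg : L → L}
    (p : ↥(FIstates neg)) {a : L} (ha : a ∈ p.1.1) (hb : a ∈ p.1.2) : False := by
  have h : a ∈ p.1.1 ∩ p.1.2 := ⟨ha, hb⟩
  rw [p.2.2.2.1] at h
  exact h

theorem FI_state {L : Type*} [Lattice L] (neg : L → L)
    (hanti : ∀ a b : L, a ≤ b → neg b ≤ neg a) (a b : L) (hab : ¬ a ≤ b) (hn : neg a ≤ b) :
    (Set.Ici a, Set.Iic b) ∈ FIstates neg := by
  refine ⟨⟨⟨a, le_refl a⟩, fun x hx y hxy => le_trans hx hxy, fun x hx y hy => le_inf hx hy⟩,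
    ⟨⟨b, le_refl b⟩, fun x hx y hxy => le_trans hxy hx, fun x hx y hy => sup_le hx hy⟩, ?_, ?_⟩
  · ext x
    simp only [Set.mem_inter_iff, Set.mem_Ici, Set.mem_Iic, Set.mem_empty_iff_false, iff_false]
    rintro ⟨h1, h2⟩
    exact hab (h1.trans h2)
  · intro x hx
    exact (hanti a x hx).trans hn

theorem FI_principal {L : Type*} [Lattice L] [BoundedOrder L] (neg : L → L)
    (hanti : ∀ a b : L, a ≤ b → neg b ≤ neg a)
    (hsemi : ∀ a : L, a ⊓ neg a = ⊥) (a : L) (ha : a ≠ ⊥) :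
    ∃ p : ↥(FIstates neg), p.1.1 = Set.Ici a ∧ p.1.2 = Set.Iic (neg a) := by
  refine ⟨⟨_, FI_state neg hanti a (neg a) ?_ le_rfl⟩, rfl, rfl⟩
  intro h
  apply ha
  rw [← hsemi a]
  exact (inf_eq_left.2 h).symm

theorem ltFI_iff {L : Type*} [Lattice L] {neg : L → L} (p q : ↥(FIstates neg)) :
    ltFI neg p q ↔ ∀ a, a ∈ p.1.2 → a ∉ q.1.1 := by
  simp only [ltFI, Set.eq_empty_iff_forall_notMem, Set.mem_inter_iff, not_and]

theorem ltFI_refl {L : Type*} [Lattice L] {neg : L → L} (p : ↥(FIstates neg)) :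
    ltFI neg p p := (ltFI_iff p p).2 fun _ h h' => FI_disj p h' h

theorem FI_open {L : Type*} [Lattice L] [BoundedOrder L] {neg : L → L}
    (U : Set ↥(FIstates neg)) (hU : @IsOpen _ (FItop neg) U) :
    ∀ x ∈ U, ∃ a, x ∈ hat neg a ∧ hat neg a ⊆ U := by
  change TopologicalSpace.GenerateOpen _ U at hU
  induction hU with
  | basic s hs =>
    obtain ⟨a, rfl⟩ := hs
    exact fun x hx => ⟨a, hx, subset_rfl⟩
  | univ => exact fun x _ => ⟨⊤, FI_top_mem x, Set.subset_univ _⟩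
  | inter s t _ _ hs ht =>
    rintro x ⟨h1, h2⟩
    obtain ⟨a, ha, ha'⟩ := hs x h1
    obtain ⟨b, hb, hb'⟩ := ht x h2
    exact ⟨a ⊓ b, x.2.1.2.2 a ha b hb,
      fun y hy => ⟨ha' (FI_up y hy inf_le_left), hb' (FI_up y hy inf_le_right)⟩⟩
  | sUnion S _ ih =>
    rintro x ⟨s, hs, hx⟩
    obtain ⟨a, ha, ha'⟩ := ih s hs x hx
    exact ⟨a, ha, fun y hy => ⟨s, hs, ha' hy⟩⟩

theorem FI_hat_open {L : Type*} [Lattice L] (neg : L → L) (a : L) :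
    @IsOpen _ (FItop neg) (hat neg a) := TopologicalSpace.GenerateOpen.basic _ ⟨a, rfl⟩

theorem subset_cl {L : Type*} [Lattice L] {neg : L → L} (A : Set ↥(FIstates neg)) :
    A ⊆ cl (ltFI neg) A := fun x hx _ h => ⟨x, h, hx⟩

theorem cl_subset_hat {L : Type*} [Lattice L] [BoundedOrder L] (neg : L → L)
    (hanti : ∀ a b : L, a ≤ b → neg b ≤ neg a)
    (hsemi : ∀ a : L, a ⊓ neg a = ⊥) (a : L) (A : Set ↥(FIstates neg)) (hA : A ⊆ hat neg a) :
    cl (ltFI neg) A ⊆ hat neg a := by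
  intro x hx
  by_contra h
  have ha : ¬ (⊤ : L) ≤ a := fun h' => h (FI_up x (FI_top_mem x) h')
  have ht : neg ⊤ ≤ a := by
    have := hsemi ⊤
    rw [top_inf_eq] at this
    rw [this]; exact bot_le
  obtain ⟨y, hy, hyA⟩ := hx ⟨_, FI_state neg hanti ⊤ a ha ht⟩
    ((ltFI_iff _ _).2 fun c hc hc' => h (FI_up x hc' hc))
  exact (ltFI_iff _ _).1 hy a (le_refl a) (hA hyA)

theorem exists_above {L : Type*} [Lattice L] [BoundedOrder L] (neg : L → L)
    (hanti : ∀ a b : L, a ≤ b → neg b ≤ neg a)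
    (hsemi : ∀ a : L, a ⊓ neg a = ⊥) (a : L) (x : ↥(FIstates neg)) (hx : a ∉ x.1.2) :
    ∃ y, ltFI neg x y ∧ y ∈ hat neg a := by
  have ha : a ≠ ⊥ := by rintro rfl; exact hx (FI_bot_mem x)
  obtain ⟨p, hp, -⟩ := FI_principal neg hanti hsemi a ha
  refine ⟨p, (ltFI_iff _ _).2 fun c hc hc' => ?_, ?_⟩
  · rw [hp] at hc'
    exact hx (FI_down x hc hc')
  · change a ∈ p.1.1
    rw [hp]; exact le_refl a

/-- For a bounded lattice `L` with a protocomplementation `¬` (antitone, `a ⊓ ¬a = ⊥`,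
`¬⊥ = ⊤`), the map `a ↦ â` is: (1) an embedding of `(L,¬)` into `(𝔏(FI(L,¬)), ¬_◁)`:
each `â` is a `c_◁`-fixpoint, the map is injective and preserves `0`, `1`, binary meets,
binary joins, and `¬`; and (2) an isomorphism onto the subalgebra of those `c_◁`-fixpoints
that are compact open in the space `S(L)`. -/
theorem stmt_15 {L : Type*} [Lattice L] [BoundedOrder L] (neg : L → L)
    (hanti : ∀ a b : L, a ≤ b → neg b ≤ neg a)
    (hsemi : ∀ a : L, a ⊓ neg a = ⊥)
    (hbot : neg ⊥ = ⊤) :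
    (∀ a : L, cl (ltFI neg) (hat neg a) = hat neg a) ∧
    Function.Injective (hat neg) ∧
    hat neg (⊥ : L) = cl (ltFI neg) ∅ ∧
    hat neg (⊤ : L) = Set.univ ∧
    (∀ a b : L, hat neg (a ⊓ b) = hat neg a ∩ hat neg b) ∧
    (∀ a b : L, hat neg (a ⊔ b) = cl (ltFI neg) (hat neg a ∪ hat neg b)) ∧
    (∀ a : L, hat neg (neg a) = negSet (ltFI neg) (hat neg a)) ∧
    (∀ a : L, @IsCompact _ (FItop neg) (hat neg a) ∧ @IsOpen _ (FItop neg) (hat neg a)) ∧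
    (∀ A : Set ↥(FIstates neg), cl (ltFI neg) A = A →
      @IsCompact _ (FItop neg) A → @IsOpen _ (FItop neg) A → ∃ a : L, hat neg a = A) := by
  have hatbot : hat neg (⊥ : L) = ∅ := by
    ext x
    exact ⟨fun h => FI_disj x h (FI_bot_mem x), fun h => h.elim⟩
  have hle : ∀ a b, hat neg a ⊆ hat neg b → a ≤ b := by
    intro a b h
    by_cases ha : a = ⊥
    · rw [ha]; exact bot_le
    obtain ⟨p, hp, -⟩ := FI_principal neg hanti hsemi a ha
    have h2 : p ∈ hat neg b := h (by change a ∈ p.1.1; rw [hp]; exact le_refl a)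
    change b ∈ p.1.1 at h2
    rw [hp] at h2
    exact h2
  refine ⟨?_, ?_, ?_, ?_, ?_, ?_, ?_, ?_, ?_⟩
  · intro a
    exact (cl_subset_hat neg hanti hsemi a _ subset_rfl).antisymm (subset_cl _)
  · intro a b h
    exact le_antisymm (hle a b h.subset) (hle b a h.symm.subset)
  · rw [hatbot]
    ext x
    refine ⟨fun h => h.elim, fun h => ?_⟩
    obtain ⟨y, -, hy⟩ := h x (ltFI_refl x)
    exact hy
  · ext x
    exact ⟨fun _ => trivial, fun _ => FI_top_mem x⟩
  · intro a b
    ext x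
    exact ⟨fun h => ⟨FI_up x h inf_le_left, FI_up x h inf_le_right⟩,
      fun h => x.2.1.2.2 a h.1 b h.2⟩
  · intro a b
    apply Set.Subset.antisymm
    · intro x hx y hy
      rw [ltFI_iff] at hy
      by_cases ha : a ∈ y.1.2
      · by_cases hb : b ∈ y.1.2
        · exact (hy _ (y.2.2.1.2.2 a ha b hb) hx).elim
        · obtain ⟨z, h1, h2⟩ := exists_above neg hanti hsemi b y hb
          exact ⟨z, h1, Or.inr h2⟩
      · obtain ⟨z, h1, h2⟩ := exists_above neg hanti hsemi a y ha
        exact ⟨z, h1, Or.inl h2⟩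
    · apply cl_subset_hat neg hanti hsemi
      rintro x (h | h)
      · exact FI_up x h le_sup_left
      · exact FI_up x h le_sup_right
  · intro a
    ext x
    constructor
    · intro h y hy hya
      exact (ltFI_iff _ _).1 hy _ (y.2.2.2.2 a hya) h
    · intro h
      by_contra hx
      have ha : a ≠ ⊥ := by
        rintro rfl
        apply hx
        rw [hbot]
        exact FI_top_mem x
      obtain ⟨p, hp, hp'⟩ := FI_principal neg hanti hsemi a ha
      refine h p ((ltFI_iff _ _).2 fun c hc hc' => ?_) ?_
      · rw [hp'] at hc
        exact hx (FI_up x hc' hc)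
      · change a ∈ p.1.1
        rw [hp]; exact le_refl a
  · intro a
    refine ⟨?_, FI_hat_open neg a⟩
    letI := FItop neg
    by_cases ha : a = ⊥
    · rw [ha, hatbot]; exact isCompact_empty
    obtain ⟨p, hp, -⟩ := FI_principal neg hanti hsemi a ha
    intro f hf hfa
    refine ⟨p, by change a ∈ p.1.1; rw [hp]; exact le_refl a, ?_⟩
    have : f ≤ nhds p := by
      refine hfa.trans ?_
      intro s hs
      obtain ⟨U, hUs, hU, hpU⟩ := mem_nhds_iff.1 hs
      obtain ⟨b, hb, hbU⟩ := FI_open U hU p hpU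
      change b ∈ p.1.1 at hb
      rw [hp] at hb
      exact fun x hx => hUs (hbU (FI_up x hx hb))
    exact ClusterPt.of_le_nhds this
  · intro A hcl hcomp hopen
    letI := FItop neg
    obtain ⟨t, ht⟩ := hcomp.elim_finite_subcover
      (fun i : {a : L // hat neg a ⊆ A} => hat neg i.1) (fun i => FI_hat_open neg i.1) (by
        intro x hx
        obtain ⟨a, ha, haA⟩ := FI_open A hopen x hx
        exact Set.mem_iUnion.2 ⟨⟨a, haA⟩, ha⟩)
    refine ⟨t.sup (fun i => i.1), Set.Subset.antisymm ?_ ?_⟩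
    · intro x hx
      rw [← hcl]
      intro y hy
      rw [ltFI_iff] at hy
      have : ∃ i ∈ t, i.1 ∉ y.1.2 := by
        by_contra! hc
        refine hy _ ?_ hx
        exact Finset.sup_induction (p := fun c => c ∈ y.1.2) (FI_bot_mem y) y.2.2.1.2.2 hc
      obtain ⟨i, -, hi⟩ := this
      obtain ⟨z, h1, h2⟩ := exists_above neg hanti hsemi i.1 y hi
      exact ⟨z, h1, i.2 h2⟩
    · intro x hx
      obtain ⟨i, hi, hxi⟩ := Set.mem_iUnion₂.1 (ht hx)
      exact FI_up x hxi (Finset.le_sup (f := fun i : {a : L // hat neg a ⊆ A} => i.1) hi)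
end

section
/- If ¬ is a weak pseudocomplementation on a bounded lattice L, then the relation ◁ of the filter-ideal frame FI(L,¬) is strongly pseudosymmetric: for all states x and all y with y ◁ x, there is a z with z ◁ y such that z pre-refines x and x pre-refines z. -/
/-- If `¬` is a weak pseudocomplementation on a bounded lattice `L`, then the relation
`◁` of `FI(L,¬)` is strongly pseudosymmetric. -/
theorem stmt_16 {L : Type*} [Lattice L] [BoundedOrder L] (neg : L → L)
    (hanti : ∀ a b : L, a ≤ b → neg b ≤ neg a)
    (hsemi : ∀ a : L, a ⊓ neg a = ⊥)
    (hdni : ∀ a : L, a ≤ neg (neg a)) :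
    ∀ x y : ↥(FIstates neg), ltFI neg y x →
      ∃ z, ltFI neg z y ∧ preRefines (ltFI neg) z x ∧ preRefines (ltFI neg) x z := by
  rintro ⟨⟨F, I⟩, hF, hI, hd, hn⟩ ⟨⟨G, J⟩, hG, hJ, hd', hn'⟩ h
  simp only [ltFI] at h
  dsimp only at hF hI hd hn hG hJ hd' hn' h
  obtain ⟨⟨f, hf⟩, hFu, hFi⟩ := hF
  obtain ⟨⟨i, hi⟩, hIl, -⟩ := hI
  refine ⟨⟨⟨F, {c | ∃ a ∈ F, c ≤ neg a}⟩, ⟨⟨f, hf⟩, hFu, hFi⟩, ⟨⟨neg f, f, hf, le_rfl⟩, ?_, ?_⟩,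
    ?_, ?_⟩, ?_, fun w hw => hw, fun w hw => hw⟩
  · rintro c ⟨a, ha, hc⟩ b hb
    exact ⟨a, ha, hb.trans hc⟩
  · rintro c ⟨a, ha, hc⟩ d ⟨b, hb, hd⟩
    exact ⟨a ⊓ b, hFi a ha b hb, sup_le (hc.trans (hanti _ _ inf_le_left))
      (hd.trans (hanti _ _ inf_le_right))⟩
  · apply Set.eq_empty_of_forall_notMem
    rintro c ⟨hc, a, ha, hca⟩
    have h1 := hFi a ha _ (hFu c hc _ hca)
    rw [hsemi] at h1
    exact Set.eq_empty_iff_forall_notMem.1 hd ⊥ ⟨h1, hIl i hi _ bot_le⟩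
  · intro a ha
    exact ⟨a, ha, le_rfl⟩
  · apply Set.eq_empty_of_forall_notMem
    rintro c ⟨⟨a, ha, hca⟩, hc⟩
    have h1 := hn' _ (hG.2.1 c hc _ hca)
    exact Set.eq_empty_iff_forall_notMem.1 h a ⟨hJ.2.1 _ h1 _ (hdni a), ha⟩
end

section
/- For all formulas φ, ψ of the propositional language 𝓛: φ ⊢_F ψ (where ⊢_F is the smallest intro-elim logic) if and only if for every bounded lattice L equipped with a weak pseudocomplementation ¬ and every valuation θ on (L,¬), the extended valuation satisfies θ̃(φ) ≤ θ̃(ψ). -/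
/-- Formulas of the propositional language `𝓛` over a set `P` of propositional variables. -/
inductive Form (P : Type) : Type
  | var : P → Form P
  | neg : Form P → Form P
  | conj : Form P → Form P → Form P
  | disj : Form P → Form P → Form P

/-- `r` is an intro-elim logic. -/
def IsIntroElim {P : Type} (r : Form P → Form P → Prop) : Prop :=
  (∀ φ, r φ φ) ∧
  (∀ φ ψ, r (Form.conj φ ψ) φ) ∧
  (∀ φ ψ, r (Form.conj φ ψ) ψ) ∧
  (∀ φ ψ, r φ (Form.disj φ ψ)) ∧
  (∀ φ ψ, r φ (Form.disj ψ φ)) ∧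
  (∀ φ, r φ (Form.neg (Form.neg φ))) ∧
  (∀ φ ψ, r (Form.conj φ (Form.neg φ)) ψ) ∧
  (∀ φ ψ χ, r φ ψ → r ψ χ → r φ χ) ∧
  (∀ φ ψ χ, r φ ψ → r φ χ → r φ (Form.conj ψ χ)) ∧
  (∀ φ ψ χ, r φ χ → r ψ χ → r (Form.disj φ ψ) χ) ∧
  (∀ φ ψ, r φ ψ → r (Form.neg ψ) (Form.neg φ))

/-- The fundamental logic `⊢_F`: the smallest intro-elim logic. -/
def FProv {P : Type} (φ ψ : Form P) : Prop :=
  ∀ r : Form P → Form P → Prop, IsIntroElim r → r φ ψ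

/-- Extension `θ̃` of a valuation `θ` to all formulas. -/
def eval {P L : Type} [Lattice L] (neg : L → L) (θ : P → L) : Form P → L
  | Form.var p => θ p
  | Form.neg φ => neg (eval neg θ φ)
  | Form.conj φ ψ => eval neg θ φ ⊓ eval neg θ ψ
  | Form.disj φ ψ => eval neg θ φ ⊔ eval neg θ ψ

theorem fprov_ie {P : Type} : IsIntroElim (FProv (P := P)) := by
  refine ⟨fun φ r h => h.1 φ, fun φ ψ r h => h.2.1 φ ψ, fun φ ψ r h => h.2.2.1 φ ψ,
    fun φ ψ r h => h.2.2.2.1 φ ψ, fun φ ψ r h => h.2.2.2.2.1 φ ψ,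
    fun φ r h => h.2.2.2.2.2.1 φ, fun φ ψ r h => h.2.2.2.2.2.2.1 φ ψ,
    fun φ ψ χ a b r h => h.2.2.2.2.2.2.2.1 φ ψ χ (a r h) (b r h),
    fun φ ψ χ a b r h => h.2.2.2.2.2.2.2.2.1 φ ψ χ (a r h) (b r h),
    fun φ ψ χ a b r h => h.2.2.2.2.2.2.2.2.2.1 φ ψ χ (a r h) (b r h),
    fun φ ψ a r h => h.2.2.2.2.2.2.2.2.2.2 φ ψ (a r h)⟩

theorem fprov_complete {P : Type} [Nonempty P] (φ ψ : Form P)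
    (H : ∀ (L : Type) (_ : Lattice L) (_ : BoundedOrder L) (neg : L → L),
        ((∀ a b : L, a ≤ b → neg b ≤ neg a) ∧ (∀ a : L, a ⊓ neg a = ⊥) ∧
          (∀ a : L, a ≤ neg (neg a))) →
        ∀ θ : P → L, eval neg θ φ ≤ eval neg θ ψ) : FProv φ ψ := by
  obtain ⟨rfl', cl, cr, dl, dr, nn, ex, tr, ci, de, cp⟩ := fprov_ie (P := P)
  obtain ⟨p⟩ := ‹Nonempty P›
  let S : Setoid (Form P) :=
    { r := fun a b => FProv a b ∧ FProv b a
      iseqv := ⟨fun a => ⟨rfl' a, rfl' a⟩, fun h => ⟨h.2, h.1⟩,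
        fun h k => ⟨tr _ _ _ h.1 k.1, tr _ _ _ k.2 h.2⟩⟩ }
  let le : Quotient S → Quotient S → Prop := Quotient.lift₂ (fun a b => FProv a b)
    (fun a b c d h k => propext
      ⟨fun x => tr _ _ _ h.2 (tr _ _ _ x k.1), fun x => tr _ _ _ h.1 (tr _ _ _ x k.2)⟩)
  have cm : ∀ a b c d, FProv a c → FProv b d → FProv (Form.conj a b) (Form.conj c d) :=
    fun a b c d h k => ci _ _ _ (tr _ _ _ (cl _ _) h) (tr _ _ _ (cr _ _) k)
  have dm : ∀ a b c d, FProv a c → FProv b d → FProv (Form.disj a b) (Form.disj c d) :=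
    fun a b c d h k => de _ _ _ (tr _ _ _ h (dl _ _)) (tr _ _ _ k (dr _ _))
  let neg : Quotient S → Quotient S := Quotient.map Form.neg
    (fun a b h => ⟨cp _ _ h.2, cp _ _ h.1⟩)
  let L : Lattice (Quotient S) :=
    { le := le
      le_refl := by rintro ⟨a⟩; exact rfl' a
      le_trans := by rintro ⟨a⟩ ⟨b⟩ ⟨c⟩; exact tr a b c
      le_antisymm := by rintro ⟨a⟩ ⟨b⟩ h k; exact Quotient.sound ⟨h, k⟩
      inf := Quotient.map₂ Form.conj
        (fun a b h c d k => ⟨cm _ _ _ _ h.1 k.1, cm _ _ _ _ h.2 k.2⟩)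
      sup := Quotient.map₂ Form.disj
        (fun a b h c d k => ⟨dm _ _ _ _ h.1 k.1, dm _ _ _ _ h.2 k.2⟩)
      inf_le_left := by rintro ⟨a⟩ ⟨b⟩; exact cl a b
      inf_le_right := by rintro ⟨a⟩ ⟨b⟩; exact cr a b
      le_inf := by rintro ⟨a⟩ ⟨b⟩ ⟨c⟩; exact ci a b c
      le_sup_left := by rintro ⟨a⟩ ⟨b⟩; exact dl a b
      le_sup_right := by rintro ⟨a⟩ ⟨b⟩; exact dr b a
      sup_le := by rintro ⟨a⟩ ⟨b⟩ ⟨c⟩; exact de a b c }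
  let bot : Form P := Form.conj (Form.var p) (Form.neg (Form.var p))
  let B : BoundedOrder (Quotient S) :=
    { bot := Quotient.mk S bot
      top := Quotient.mk S (Form.neg bot)
      bot_le := by rintro ⟨a⟩; exact ex _ a
      le_top := by rintro ⟨a⟩; exact tr _ _ _ (nn a) (cp _ _ (ex _ _)) }
  have key : ∀ χ : Form P,
      eval neg (fun q => Quotient.mk S (Form.var q)) χ = Quotient.mk S χ := by
    intro χ
    induction χ with
    | var q => rfl
    | neg a ih => simp only [eval, ih]; rfl
    | conj a b iha ihb => simp only [eval, iha, ihb]; rfl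
    | disj a b iha ihb => simp only [eval, iha, ihb]; rfl
  have := H (Quotient S) L B neg
    ⟨by rintro ⟨a⟩ ⟨b⟩; exact cp a b,
     by rintro ⟨a⟩; exact Quotient.sound ⟨ex _ _, ex _ _⟩,
     by rintro ⟨a⟩; exact nn a⟩ (fun q => Quotient.mk S (Form.var q))
  rw [key, key] at this
  exact this

/-- Soundness and completeness of the fundamental logic with respect to bounded lattices
equipped with a weak pseudocomplementation. -/
theorem stmt_18 {P : Type} [Nonempty P] (φ ψ : Form P) :
    FProv φ ψ ↔
      ∀ (L : Type) (_ : Lattice L) (_ : BoundedOrder L) (neg : L → L),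
        ((∀ a b : L, a ≤ b → neg b ≤ neg a) ∧ (∀ a : L, a ⊓ neg a = ⊥) ∧
          (∀ a : L, a ≤ neg (neg a))) →
        ∀ θ : P → L, eval neg θ φ ≤ eval neg θ ψ := by
  refine ⟨fun h L _ _ neg hn θ => ?_, fprov_complete φ ψ⟩
  obtain ⟨anti, bt, dn⟩ := hn
  refine h (fun a b => eval neg θ a ≤ eval neg θ b) ⟨fun _ => le_rfl, fun _ _ => inf_le_left,
    fun _ _ => inf_le_right, fun _ _ => le_sup_left, fun _ _ => le_sup_right, fun _ => dn _,
    fun a b => ?_, fun _ _ _ => le_trans, fun _ _ _ => le_inf, fun _ _ _ => sup_le,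
    fun _ _ => anti _ _⟩
  simp only [eval, bt, bot_le]
end

section
/- Let g : 𝓛 → 𝓛 be the translation defined by g(p) = ¬¬p for propositional variables p, g(¬φ) = ¬g(φ), g(φ∧ψ) = g(φ) ∧ g(ψ), and g(φ∨ψ) = ¬(¬g(φ) ∧ ¬g(ψ)). Then for all formulas φ, ψ of 𝓛: φ ⊢_O ψ if and only if g(φ) ⊢_F g(ψ). -/
/-- Orthologic `⊢_O`: the smallest intro-elim logic containing `¬¬φ ⊢ φ` for all `φ`. -/
def OProv {P : Type} (φ ψ : Form P) : Prop :=
  ∀ r : Form P → Form P → Prop,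
    IsIntroElim r → (∀ χ, r (Form.neg (Form.neg χ)) χ) → r φ ψ

/-- The negative translation `g`. -/
def gTrans {P : Type} : Form P → Form P
  | Form.var p => Form.neg (Form.neg (Form.var p))
  | Form.neg φ => Form.neg (gTrans φ)
  | Form.conj φ ψ => Form.conj (gTrans φ) (gTrans ψ)
  | Form.disj φ ψ =>
      Form.neg (Form.conj (Form.neg (gTrans φ)) (Form.neg (gTrans ψ)))

theorem g_stab {P : Type} {r : Form P → Form P → Prop} (h : IsIntroElim r) (φ : Form P) :
    r (Form.neg (Form.neg (gTrans φ))) (gTrans φ) := by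
  obtain ⟨hid, hl, hr, hdl, hdr, hnn, hex, htr, hand, hor, hneg⟩ := h
  induction φ with
  | var p => exact hneg _ _ (hnn _)
  | neg φ ih => exact hneg _ _ (hnn _)
  | conj φ ψ ih1 ih2 =>
    exact hand _ _ _ (htr _ _ _ (hneg _ _ (hneg _ _ (hl _ _))) ih1)
      (htr _ _ _ (hneg _ _ (hneg _ _ (hr _ _))) ih2)
  | disj φ ψ ih1 ih2 => exact hneg _ _ (hnn _)

theorem g_intro {P : Type} {r : Form P → Form P → Prop} (h : IsIntroElim r) :
    IsIntroElim (fun a b => r (gTrans a) (gTrans b)) := by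
  have hst := g_stab h
  obtain ⟨hid, hl, hr, hdl, hdr, hnn, hex, htr, hand, hor, hneg⟩ := h
  refine ⟨fun _ => hid _, fun _ _ => hl _ _, fun _ _ => hr _ _,
    fun _ _ => htr _ _ _ (hnn _) (hneg _ _ (hl _ _)),
    fun _ _ => htr _ _ _ (hnn _) (hneg _ _ (hr _ _)),
    fun _ => hnn _, fun _ _ => hex _ _, fun _ _ _ => htr _ _ _,
    fun _ _ _ => hand _ _ _,
    fun φ ψ χ h1 h2 => htr _ _ _ (hneg _ _ (hand _ _ _ (hneg _ _ h1) (hneg _ _ h2))) (hst χ),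
    fun _ _ => hneg _ _⟩

theorem g_equiv {P : Type} {r : Form P → Form P → Prop} (h : IsIntroElim r)
    (hdn : ∀ χ, r (Form.neg (Form.neg χ)) χ) (φ : Form P) :
    r φ (gTrans φ) ∧ r (gTrans φ) φ := by
  obtain ⟨hid, hl, hr, hdl, hdr, hnn, hex, htr, hand, hor, hneg⟩ := h
  induction φ with
  | var p => exact ⟨hnn _, hdn _⟩
  | neg φ ih => exact ⟨hneg _ _ ih.2, hneg _ _ ih.1⟩
  | conj φ ψ ih1 ih2 =>
    exact ⟨hand _ _ _ (htr _ _ _ (hl _ _) ih1.1) (htr _ _ _ (hr _ _) ih2.1),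
      hand _ _ _ (htr _ _ _ (hl _ _) ih1.2) (htr _ _ _ (hr _ _) ih2.2)⟩
  | disj φ ψ ih1 ih2 =>
    refine ⟨hor _ _ _ (htr _ _ _ ih1.1 (htr _ _ _ (hnn _) (hneg _ _ (hl _ _))))
      (htr _ _ _ ih2.1 (htr _ _ _ (hnn _) (hneg _ _ (hr _ _)))), ?_⟩
    exact htr _ _ _ (hneg _ _ (hand _ _ _
      (hneg _ _ (htr _ _ _ ih1.2 (hdl φ ψ))) (hneg _ _ (htr _ _ _ ih2.2 (hdr ψ φ))))) (hdn _)

/-- The translation `g` is a full and faithful embedding of orthologic into the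
fundamental logic. -/
theorem stmt_19 {P : Type} [Nonempty P] (φ ψ : Form P) :
    OProv φ ψ ↔ FProv (gTrans φ) (gTrans ψ) := by
  constructor
  · intro h r hr
    exact h (fun a b => r (gTrans a) (gTrans b)) (g_intro hr) (g_stab hr)
  · intro h r hr hdn
    have htr := hr.2.2.2.2.2.2.2.1
    exact htr _ _ _ (g_equiv hr hdn φ).1 (htr _ _ _ (h r hr) (g_equiv hr hdn ψ).2)
end
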